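/- Let m : ℝ² → ℝ be a smooth, nowhere-vanishing function of (x,t) satisfying the KdV equation m_t + m_xxx − 6m·m_x = 0, let λ ∈ ℝ, and let ψ : ℝ² → ℝ be a smooth function satisfying the scalar KdV Lax pair ψ_xx = (m − λ)ψ and ψ_t = (2m + 4λ)ψ_x − m_x·ψ. Let y : ℝ² → ℝ be smooth with y_x = m and y_t = 3m² − m_xx, let M be a smooth function of (y,T) with M(y(x,t), t) = m(x,t), and let Φ be a smooth function of (y,T) with Φ(y(x,t), t) = ψ(x,t) for all (x,t). Then at every point of the form (y(x,t), t), Φ satisfies the scalar RKdV Lax pair: Φ_yy = −(M_y/M)Φ_y + ((M − λ)/M²)Φ and Φ_T = (M²·M_yy + M·M_y² − M² + 4λM)Φ_y − M·M_y·Φ. -/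

import Mathlib

noncomputable section

/-- Partial derivative of `f` with respect to its first argument. -/
def d1 (f : ℝ → ℝ → ℝ) : ℝ → ℝ → ℝ := fun a b => deriv (fun a' => f a' b) a

/-- Partial derivative of `f` with respect to its second argument. -/
def d2 (f : ℝ → ℝ → ℝ) : ℝ → ℝ → ℝ := fun a b => deriv (fun b' => f a b') b

/-- Smoothness of a two-variable real function. -/
def Smooth2 (f : ℝ → ℝ → ℝ) : Prop := ContDiff ℝ (⊤ : ℕ∞) (fun p : ℝ × ℝ => f p.1 p.2)

/-! Since `y_x = m = M ∘ y`, the operator `∂_x` acts on functions pulled back along `y` as `M ∂_y`,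
while `∂_t` acts as `∂_T + y_t ∂_y`. In particular `m_x = M M_y` and `m_xx = M² M_yy + M M_y²`, so
that `y_t = 3 M² - M² M_yy - M M_y²`. Substituting in the KdV Lax pair and solving for `Φ_yy` and
`Φ_T` gives the RKdV Lax pair. -/

variable {𝕜 E : Type*} [NontriviallyNormedField 𝕜] [NormedAddCommGroup E] [NormedSpace 𝕜 E]

section Pullback

variable {y v : 𝕜 → 𝕜} {F f : 𝕜 → E} {x : 𝕜}

theorem deriv_eq_smul_deriv_of_comp_eq {y' : 𝕜} (hF : DifferentiableAt 𝕜 F (y x))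
    (hy : HasDerivAt y y' x) (hf : ∀ x', F (y x') = f x') :
    deriv f x = y' • deriv F (y x) := by
  rw [← funext hf]
  exact (hF.hasDerivAt.scomp x hy).deriv

theorem deriv_deriv_eq_of_comp_eq (hv : DifferentiableAt 𝕜 v (y x)) (hF : Differentiable 𝕜 F)
    (hF' : DifferentiableAt 𝕜 (deriv F) (y x)) (hy : ∀ x', HasDerivAt y (v (y x')) x')
    (hf : ∀ x', F (y x') = f x') :
    deriv (deriv f) x =
      v (y x) ^ 2 • deriv (deriv F) (y x) + (v (y x) * deriv v (y x)) • deriv F (y x) := by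
  have hf' : ∀ x', (v • deriv F) (y x') = deriv f x' :=
    fun x' => (deriv_eq_smul_deriv_of_comp_eq (hF _) (hy x') hf).symm
  rw [deriv_eq_smul_deriv_of_comp_eq (hv.smul hF') (hy x) hf', deriv_smul hv hF']
  module

theorem deriv_deriv_eq_of_deriv_deriv_comp_eq_smul {c : 𝕜} (hv : DifferentiableAt 𝕜 v (y x))
    (hF : Differentiable 𝕜 F) (hF' : DifferentiableAt 𝕜 (deriv F) (y x))
    (hy : ∀ x', HasDerivAt y (v (y x')) x') (hf : ∀ x', F (y x') = f x') (hne : v (y x) ≠ 0)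
    (hode : deriv (deriv f) x = c • f x) :
    deriv (deriv F) (y x) =
      -(deriv v (y x) / v (y x)) • deriv F (y x) + (c / v (y x) ^ 2) • F (y x) := by
  have hpull := deriv_deriv_eq_of_comp_eq hv hF hF' hy hf
  rw [hode, ← hf x] at hpull
  have hsolved : v (y x) ^ 2 • deriv (deriv F) (y x) =
      c • F (y x) - (v (y x) * deriv v (y x)) • deriv F (y x) :=
    eq_sub_of_add_eq hpull.symm
  rw [← inv_smul_smul₀ (pow_ne_zero 2 hne) (deriv (deriv F) (y x)), hsolved]
  match_scalars <;> field_simp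

end Pullback

/-- The partial derivative with respect to the first argument, over any nontrivially normed field
and with vector values. For real functions it is definitionally `d1`. -/
def deriv₁ (f : 𝕜 → 𝕜 → E) (a b : 𝕜) : E := deriv (fun a' => f a' b) a

/-- The partial derivative with respect to the second argument, over any nontrivially normed field
and with vector values. For real functions it is definitionally `d2`. -/
def deriv₂ (f : 𝕜 → 𝕜 → E) (a b : 𝕜) : E := deriv (fun b' => f a b') b

theorem hasDerivAt_deriv₁ {F : 𝕜 → 𝕜 → E} {a b : 𝕜}
    (hF : DifferentiableAt 𝕜 (fun p : 𝕜 × 𝕜 => F p.1 p.2) (a, b)) :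
    HasDerivAt (fun a' => F a' b) (deriv₁ F a b) a :=
  (hF.comp (f := fun a' => (a', b)) a
    (differentiableAt_id.prodMk (differentiableAt_const b))).hasDerivAt

theorem hasDerivAt_deriv₂ {F : 𝕜 → 𝕜 → E} {a b : 𝕜}
    (hF : DifferentiableAt 𝕜 (fun p : 𝕜 × 𝕜 => F p.1 p.2) (a, b)) :
    HasDerivAt (fun b' => F a b') (deriv₂ F a b) b :=
  (hF.comp (f := fun b' => (a, b')) b
    ((differentiableAt_const a).prodMk differentiableAt_id)).hasDerivAt

theorem deriv_comp_eq_smul_deriv₁_add_deriv₂ {F : 𝕜 → 𝕜 → E} {y : 𝕜 → 𝕜} {t : 𝕜}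
    (hF : DifferentiableAt 𝕜 (fun p : 𝕜 × 𝕜 => F p.1 p.2) (y t, t))
    (hy : DifferentiableAt 𝕜 y t) :
    deriv (fun t' => F (y t') t') t =
      deriv y t • deriv₁ F (y t) t + deriv₂ F (y t) t := by
  set L := fderiv 𝕜 (fun p : 𝕜 × 𝕜 => F p.1 p.2) (y t, t)
  have hL : HasFDerivAt (fun p : 𝕜 × 𝕜 => F p.1 p.2) L (y t, t) := hF.hasFDerivAt
  have hfst : deriv₁ F (y t) t = L (1, 0) :=
    (hL.comp_hasDerivAt (f := fun a => (a, t)) (y t)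
      ((hasDerivAt_id _).prodMk (hasDerivAt_const _ t))).deriv
  have hsnd : deriv₂ F (y t) t = L (0, 1) :=
    (hL.comp_hasDerivAt (f := fun b => (y t, b)) t
      ((hasDerivAt_const _ (y t)).prodMk (hasDerivAt_id _))).deriv
  have hcurve : deriv (fun t' => F (y t') t') t = L (deriv y t, 1) :=
    (hL.comp_hasDerivAt (f := fun t' => (y t', t')) t
      (hy.hasDerivAt.prodMk (hasDerivAt_id _))).deriv
  rw [hcurve, hfst, hsnd, ← map_smul, ← map_add]
  simp

theorem deriv₂_eq_of_kdv_evolution_comp {m y M : 𝕜 → 𝕜 → 𝕜} {ψ Φ : 𝕜 → 𝕜 → E} {lam x t : 𝕜}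
    (hM : Differentiable 𝕜 fun a => M a t)
    (hM' : DifferentiableAt 𝕜 (fun a => deriv₁ M a t) (y x t))
    (hΦ : DifferentiableAt 𝕜 (fun p : 𝕜 × 𝕜 => Φ p.1 p.2) (y x t, t))
    (hyx : ∀ x', HasDerivAt (fun s => y s t) (M (y x' t) t) x')
    (hyt : HasDerivAt (fun t' => y x t') (3 * m x t ^ 2 - deriv₁ (deriv₁ m) x t) t)
    (hMm : ∀ x', M (y x' t) t = m x' t) (hΦψ : ∀ x' t', Φ (y x' t') t' = ψ x' t')
    (htime : deriv₂ ψ x t =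
      (2 * m x t + 4 * lam) • deriv₁ ψ x t - deriv₁ m x t • ψ x t) :
    deriv₂ Φ (y x t) t =
      (M (y x t) t ^ 2 * deriv₁ (deriv₁ M) (y x t) t + M (y x t) t * deriv₁ M (y x t) t ^ 2
          - M (y x t) t ^ 2 + 4 * lam * M (y x t) t) • deriv₁ Φ (y x t) t
        - (M (y x t) t * deriv₁ M (y x t) t) • Φ (y x t) t := by
  have hmx : deriv₁ m x t = M (y x t) t * deriv₁ M (y x t) t :=
    deriv_eq_smul_deriv_of_comp_eq (hM _) (hyx x) hMm
  have hmxx : deriv₁ (deriv₁ m) x t =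
      M (y x t) t ^ 2 * deriv₁ (deriv₁ M) (y x t) t
        + M (y x t) t * deriv₁ M (y x t) t * deriv₁ M (y x t) t :=
    deriv_deriv_eq_of_comp_eq (y := fun s => y s t) (hM _) hM hM' hyx hMm
  have hψx : deriv₁ ψ x t = M (y x t) t • deriv₁ Φ (y x t) t :=
    deriv_eq_smul_deriv_of_comp_eq (y := fun s => y s t) (hasDerivAt_deriv₁ hΦ).differentiableAt
      (hyx x) fun x' => hΦψ x' t
  have hψt : deriv₂ ψ x t =
      (3 * m x t ^ 2 - deriv₁ (deriv₁ m) x t) • deriv₁ Φ (y x t) t + deriv₂ Φ (y x t) t := by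
    rw [← hyt.deriv, ← deriv_comp_eq_smul_deriv₁_add_deriv₂ hΦ hyt.differentiableAt]
    simp only [hΦψ, deriv₂]
  rw [← sub_eq_iff_eq_add'.2 hψt, htime, hψx, hmxx, hmx, ← hMm, ← hΦψ]
  module

theorem reciprocal_KdV_LaxPair_to_RKdV_LaxPair_general
    {m y M : 𝕜 → 𝕜 → 𝕜} {ψ Φ : 𝕜 → 𝕜 → E} {lam x t : 𝕜}
    (hy : Differentiable 𝕜 fun p : 𝕜 × 𝕜 => y p.1 p.2)
    (hM : Differentiable 𝕜 fun a => M a t)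
    (hM' : DifferentiableAt 𝕜 (fun a => deriv₁ M a t) (y x t))
    (hΦ : Differentiable 𝕜 fun p : 𝕜 × 𝕜 => Φ p.1 p.2)
    (hΦ' : DifferentiableAt 𝕜 (fun a => deriv₁ Φ a t) (y x t))
    (hne : m x t ≠ 0)
    (hspec : deriv₁ (deriv₁ ψ) x t = (m x t - lam) • ψ x t)
    (htime : deriv₂ ψ x t =
      (2 * m x t + 4 * lam) • deriv₁ ψ x t - deriv₁ m x t • ψ x t)
    (hyx : ∀ x', deriv₁ y x' t = m x' t)
    (hyt : deriv₂ y x t = 3 * m x t ^ 2 - deriv₁ (deriv₁ m) x t)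
    (hMm : ∀ x', M (y x' t) t = m x' t) (hΦψ : ∀ x' t', Φ (y x' t') t' = ψ x' t') :
    deriv₁ (deriv₁ Φ) (y x t) t =
        -(deriv₁ M (y x t) t / M (y x t) t) • deriv₁ Φ (y x t) t
          + ((M (y x t) t - lam) / M (y x t) t ^ 2) • Φ (y x t) t
      ∧ deriv₂ Φ (y x t) t =
        (M (y x t) t ^ 2 * deriv₁ (deriv₁ M) (y x t) t + M (y x t) t * deriv₁ M (y x t) t ^ 2
            - M (y x t) t ^ 2 + 4 * lam * M (y x t) t) • deriv₁ Φ (y x t) t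
          - (M (y x t) t * deriv₁ M (y x t) t) • Φ (y x t) t := by
  have hyt' : HasDerivAt (fun t' => y x t') (3 * m x t ^ 2 - deriv₁ (deriv₁ m) x t) t :=
    hyt ▸ hasDerivAt_deriv₂ (hy _)
  have hyx' : ∀ x', HasDerivAt (fun s => y s t) (M (y x' t) t) x' := fun x' =>
    (hyx x').trans (hMm x').symm ▸ hasDerivAt_deriv₁ (hy _)
  have hΦt : Differentiable 𝕜 fun a => Φ a t := fun _ => (hasDerivAt_deriv₁ (hΦ _)).differentiableAt
  constructor
  · rw [← hMm x] at hne hspec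
    exact deriv_deriv_eq_of_deriv_deriv_comp_eq_smul (y := fun s => y s t) (hM _) hΦt hΦ' hyx'
      (fun x' => hΦψ x' t) hne hspec
  · exact deriv₂_eq_of_kdv_evolution_comp hM hM' (hΦ _) hyx' hyt' hMm hΦψ htime

namespace Smooth2

variable {f : ℝ → ℝ → ℝ}

theorem differentiable_uncurry (hf : Smooth2 f) :
    Differentiable ℝ fun p : ℝ × ℝ => f p.1 p.2 :=
  ContDiff.differentiable hf (by simp)

theorem contDiff_fst (hf : Smooth2 f) (b : ℝ) : ContDiff ℝ (⊤ : ℕ∞) fun a => f a b :=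
  ContDiff.comp hf (contDiff_prodMk_left b)

theorem differentiable_fst (hf : Smooth2 f) (b : ℝ) : Differentiable ℝ fun a => f a b :=
  (hf.contDiff_fst b).differentiable (by simp)

theorem differentiable_d1_fst (hf : Smooth2 f) (b : ℝ) : Differentiable ℝ fun a => d1 f a b :=
  (contDiff_infty_iff_deriv.1 (hf.contDiff_fst b)).2.differentiable (by simp)

end Smooth2

/-- the reciprocal transformation of the scalar KdV Lax pair yields the
scalar RKdV Lax pair at every point `(y(x,t), t)`. -/
theorem reciprocal_KdV_LaxPair_to_RKdV_LaxPair
    (m ψ y M Φ : ℝ → ℝ → ℝ) (lam : ℝ)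
    (hm : Smooth2 m) (hψ : Smooth2 ψ) (hy : Smooth2 y)
    (hM : Smooth2 M) (hΦ : Smooth2 Φ)
    (hne : ∀ x t, m x t ≠ 0)
    (hKdV : ∀ x t, d2 m x t + d1 (d1 (d1 m)) x t - 6 * m x t * d1 m x t = 0)
    -- scalar KdV Lax pair :
    (hspec : ∀ x t, d1 (d1 ψ) x t = (m x t - lam) * ψ x t)
    (htime : ∀ x t, d2 ψ x t = (2 * m x t + 4 * lam) * d1 ψ x t - d1 m x t * ψ x t)
    -- reciprocal transformation :
    (hyx : ∀ x t, d1 y x t = m x t)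
    (hyt : ∀ x t, d2 y x t = 3 * (m x t) ^ 2 - d1 (d1 m) x t)
    (hMm : ∀ x t, M (y x t) t = m x t)
    (hΦψ : ∀ x t, Φ (y x t) t = ψ x t) :
    ∀ x t,
      d1 (d1 Φ) (y x t) t =
          -(d1 M (y x t) t / M (y x t) t) * d1 Φ (y x t) t
            + ((M (y x t) t - lam) / (M (y x t) t) ^ 2) * Φ (y x t) t
      ∧ d2 Φ (y x t) t =
          ((M (y x t) t) ^ 2 * d1 (d1 M) (y x t) t
              + M (y x t) t * (d1 M (y x t) t) ^ 2
              - (M (y x t) t) ^ 2 + 4 * lam * M (y x t) t) * d1 Φ (y x t) t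
            - M (y x t) t * d1 M (y x t) t * Φ (y x t) t := by
  intro x t
  exact reciprocal_KdV_LaxPair_to_RKdV_LaxPair_general hy.differentiable_uncurry
    (hM.differentiable_fst t) (hM.differentiable_d1_fst t _) hΦ.differentiable_uncurry
    (hΦ.differentiable_d1_fst t _) (hne x t) (hspec x t) (htime x t) (hyx · t) (hyt x t)
    (hMm · t) hΦψ
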